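/- The Ramsey number R(K4^+, K4^+) equals 18; that is, every 2-coloring of the edges of the complete graph on 18 vertices with red and blue contains a monochromatic copy of K4^+, and there exists a 2-coloring of the edges of the complete graph on 17 vertices with red and blue containing no monochromatic copy of K4^+. -/

import Mathlib

/-- A symmetric edge-coloring function on the complete graph on `Fin n`. -/
def IsSym {n : ℕ} {α : Type*} (c : Fin n → Fin n → α) : Prop :=
  ∀ u v : Fin n, c u v = c v u

/-- A Gallai coloring: no triangle whose three edges get three distinct colors. -/
def NoRainbowTriangle {n : ℕ} {α : Type*} (c : Fin n → Fin n → α) : Prop :=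
  ∀ u v w : Fin n, u ≠ v → u ≠ w → v ≠ w →
    c u v = c u w ∨ c u v = c v w ∨ c u w = c v w

/-- There is a monochromatic triangle in color `i`. -/
def HasMonoK3 {n : ℕ} {α : Type*} (c : Fin n → Fin n → α) (i : α) : Prop :=
  ∃ a b d : Fin n, a ≠ b ∧ a ≠ d ∧ b ≠ d ∧
    c a b = i ∧ c a d = i ∧ c b d = i

/-- There is a monochromatic copy of `K₄⁺ = K₁ ∨ (K₃ + K₁)` in color `i`:
a vertex `x` joined to all of `a, b, d, e`, where `a b d` is a triangle
(equivalently `K₄` on `{x,a,b,d}` together with a pendant edge `x e`). -/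
def HasMonoK4plus {n : ℕ} {α : Type*} (c : Fin n → Fin n → α) (i : α) : Prop :=
  ∃ x a b d e : Fin n,
    x ≠ a ∧ x ≠ b ∧ x ≠ d ∧ x ≠ e ∧ a ≠ b ∧ a ≠ d ∧ a ≠ e ∧ b ≠ d ∧ b ≠ e ∧ d ≠ e ∧
    c x a = i ∧ c x b = i ∧ c x d = i ∧ c x e = i ∧
    c a b = i ∧ c a d = i ∧ c b d = i

/-!
`R(K₄, K₄) ≤ 18` follows from the recursion `R(k + 1, l + 1) ≤ R(k, l + 1) + R(k + 1, l)` and its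
parity refinement, which gives `R(3, 4) ≤ 9`. If neither `G` nor `Gᶜ` contains `K₄⁺`, then every
4-clique of `G` is joined in `Gᶜ` to all remaining vertices. Hence a 4-clique `t` in a graph with at
least 13 vertices forces `Gᶜ` to be triangle-free off `t`, so `R(3, 4) ≤ 9` yields a second
4-clique `s` off `t`. By the same token `Gᶜ` has no edge off `s ∪ t`, so `G` is complete there and
contains `K₄⁺`. For the lower bound, the quadratic residues modulo 17 color `K₁₇` without a
monochromatic `K₄`.
-/

open Finset

section Ramsey

variable {V : Type*} {k l p q : ℕ}

/-- The Ramsey bound `R(K_k, K_l) ≤ m` for graphs on subsets of `V`: every set of at least `m`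
vertices contains a `k`-clique of `G` or an `l`-clique of `Gᶜ`. It quantifies over finite subsets
of a fixed type, so that neighborhoods need not be turned into types of their own. -/
def IsRamseyBound (V : Type*) (k l m : ℕ) : Prop :=
  ∀ (G : SimpleGraph V) (S : Finset V), G.CliqueFreeOn S k → Gᶜ.CliqueFreeOn S l → #S < m

theorem IsRamseyBound.symm {m : ℕ} (h : IsRamseyBound V k l m) : IsRamseyBound V l k m :=
  fun G S hk hl ↦ h Gᶜ S hl (by rwa [compl_compl])

theorem isRamseyBound_two_left (V : Type*) (l : ℕ) : IsRamseyBound V 2 l l := by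
  intro G S hG hGc
  by_contra! hcard
  obtain ⟨t, htS, ht⟩ := exists_subset_card_eq hcard
  refine hGc (coe_subset.2 htS) ⟨fun x hx y hy hxy ↦ ⟨hxy, ?_⟩, ht⟩
  exact (G.cliqueFreeOn_two).1 hG (htS hx) (htS hy) hxy

theorem card_filter_adj_add_card_filter_compl_adj [DecidableEq V] (G : SimpleGraph V)
    [DecidableRel G.Adj] {S : Finset V} {v : V} (hv : v ∈ S) :
    #{w ∈ S | G.Adj v w} + #{w ∈ S | Gᶜ.Adj v w} + 1 = #S := by
  have hadj : {w ∈ S | G.Adj v w} = {w ∈ S.erase v | G.Adj v w} := by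
    ext w; simp only [mem_filter, mem_erase]; grind [G.ne_of_adj]
  have hcompl : {w ∈ S | Gᶜ.Adj v w} = {w ∈ S.erase v | ¬ G.Adj v w} := by
    ext w; simp only [mem_filter, mem_erase, SimpleGraph.compl_adj]; grind
  rw [hadj, hcompl, card_filter_add_card_filter_not, card_erase_add_one hv]

theorem IsRamseyBound.card_filter_adj_lt {G : SimpleGraph V} [DecidableRel G.Adj] {S : Finset V}
    {v : V} (h : IsRamseyBound V k l p) (hG : G.CliqueFreeOn S (k + 1))
    (hGc : Gᶜ.CliqueFreeOn S l) (hv : v ∈ S) : #{w ∈ S | G.Adj v w} < p :=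
  h G _ ((hG.of_succ _ hv).subset _ fun _ hw ↦ by simpa using hw)
    (hGc.subset _ (coe_subset.2 (filter_subset _ _)))

theorem IsRamseyBound.card_filter_compl_adj_lt [DecidableEq V] {G : SimpleGraph V}
    [DecidableRel G.Adj] {S : Finset V} {v : V} (h : IsRamseyBound V k l q)
    (hG : G.CliqueFreeOn S k) (hGc : Gᶜ.CliqueFreeOn S (l + 1)) (hv : v ∈ S) :
    #{w ∈ S | Gᶜ.Adj v w} < q :=
  h.symm.card_filter_adj_lt hGc (by rwa [compl_compl]) hv

theorem IsRamseyBound.succ_succ (hp : IsRamseyBound V k (l + 1) p)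
    (hq : IsRamseyBound V (k + 1) l q) (hpq : 0 < p + q) :
    IsRamseyBound V (k + 1) (l + 1) (p + q) := by
  classical
  intro G S hG hGc
  obtain rfl | ⟨v, hv⟩ := S.eq_empty_or_nonempty
  · simpa using hpq
  · have hred := hp.card_filter_adj_lt hG hGc hv
    have hblue := hq.card_filter_compl_adj_lt hG hGc hv
    have hsum := card_filter_adj_add_card_filter_compl_adj G hv
    omega

theorem even_card_of_forall_odd_card_filter_adj {G : SimpleGraph V} [DecidableRel G.Adj]
    {S : Finset V} (h : ∀ v ∈ S, Odd #{w ∈ S | G.Adj v w}) : Even #S := by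
  classical
  have hdegree (v : S) : (G.induce (S : Set V)).degree v = #{w ∈ S | G.Adj v w} := by
    rw [← SimpleGraph.card_neighborFinset_eq_degree, ← card_map (.subtype (· ∈ S))]
    congr 1
    ext w
    simp [and_comm]
  have hodd (v : S) : Odd ((G.induce (S : Set V)).degree v) := hdegree v ▸ h v v.2
  have heven := (G.induce (S : Set V)).even_card_odd_degree_vertices
  simpa [hodd] using heven

-- In a graph on `p + q - 1` vertices avoiding both cliques all degrees would equal `p - 1`; but
-- `p - 1` and `p + q - 1` are both odd.
theorem IsRamseyBound.succ_succ_of_even (hp : IsRamseyBound V k (l + 1) p)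
    (hq : IsRamseyBound V (k + 1) l q) (hpq : 0 < p + q) (hp_even : Even p) (hq_even : Even q) :
    IsRamseyBound V (k + 1) (l + 1) (p + q - 1) := by
  classical
  intro G S hG hGc
  by_contra! hcard
  obtain ⟨T, hTS, hT⟩ := exists_subset_card_eq hcard
  replace hG := hG.subset _ (coe_subset.2 hTS)
  replace hGc := hGc.subset _ (coe_subset.2 hTS)
  have hdegree (v) (hv : v ∈ T) : Odd #{w ∈ T | G.Adj v w} := by
    have hred := hp.card_filter_adj_lt hG hGc hv
    have hblue := hq.card_filter_compl_adj_lt hG hGc hv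
    have hsum := card_filter_adj_add_card_filter_compl_adj G hv
    grind
  have hT_even := even_card_of_forall_odd_card_filter_adj hdegree
  grind

theorem isRamseyBound_three_three (V : Type*) : IsRamseyBound V 3 3 6 :=
  (isRamseyBound_two_left V 3).succ_succ (isRamseyBound_two_left V 3).symm (by norm_num)

theorem isRamseyBound_three_four (V : Type*) : IsRamseyBound V 3 4 9 :=
  (isRamseyBound_two_left V 4).succ_succ_of_even (isRamseyBound_three_three V) (by norm_num)
    (by decide) (by decide)

theorem isRamseyBound_four_four (V : Type*) : IsRamseyBound V 4 4 18 :=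
  (isRamseyBound_three_four V).succ_succ (isRamseyBound_three_four V).symm (by norm_num)

end Ramsey

section PendantClique

variable {V : Type*} {G : SimpleGraph V} {k : ℕ}

/-- `G` contains no copy of `K_k⁺`, the complete graph `K_k` with a pendant edge. Since a copy of
`K_k⁺` is a `k`-clique with an edge leaving it, this says that no edge leaves a `k`-clique. -/
def PendantCliqueFree (G : SimpleGraph V) (k : ℕ) : Prop :=
  ∀ ⦃t⦄, G.IsNClique k t → ∀ x ∈ t, ∀ y ∉ t, ¬ G.Adj x y

namespace PendantCliqueFree

theorem compl_adj (h : PendantCliqueFree G k) {t : Finset V} (ht : G.IsNClique k t) {x y : V}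
    (hx : x ∈ t) (hy : y ∉ t) : Gᶜ.Adj x y :=
  ⟨ne_of_mem_of_not_mem hx hy, h ht x hx y hy⟩

theorem cliqueFreeOn_of_subset_neighborSet (h : PendantCliqueFree G (k + 1)) {W : Finset V} {x : V}
    (hW : (W : Set V) ⊆ G.neighborSet x) (hcard : k < #W) : G.CliqueFreeOn W k := by
  classical
  intro t htW ht
  obtain ⟨y, hyW, hyt⟩ := exists_mem_notMem_of_card_lt_card (ht.card_eq.trans_lt hcard)
  have hxy : G.Adj x y := hW hyW
  refine h (ht.insert fun z hz ↦ hW (htW hz)) x (mem_insert_self x t) y ?_ hxy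
  simp [hxy.ne', hyt]

theorem card_le_of_isClique (h : PendantCliqueFree G k) (hk : k ≠ 0) {s : Finset V}
    (hs : G.IsClique s) : #s ≤ k := by
  by_contra! hcard
  obtain ⟨t, hts, ht⟩ := exists_subset_card_eq hcard.le
  obtain ⟨x, hx⟩ : t.Nonempty := card_ne_zero.1 (ht ▸ hk)
  obtain ⟨y, hys, hyt⟩ := exists_mem_notMem_of_card_lt_card (ht.trans_lt hcard)
  exact h ⟨hs.subset (coe_subset.2 hts), ht⟩ x hx y hyt
    (hs (hts hx) hys (ne_of_mem_of_not_mem hx hyt))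

theorem cliqueFree_four [Fintype V] (h : PendantCliqueFree G 4) (hc : PendantCliqueFree Gᶜ 4)
    (hcard : 13 ≤ Fintype.card V) : G.CliqueFree 4 := by
  classical
  intro t ht
  have ht_card : #tᶜ + 4 = Fintype.card V := by rw [← ht.card_eq, card_compl_add_card]
  obtain ⟨x, hx⟩ : t.Nonempty := card_ne_zero.1 (by simp [ht.card_eq])
  have htriangle : Gᶜ.CliqueFreeOn (tᶜ : Finset V) 3 :=
    hc.cliqueFreeOn_of_subset_neighborSet
      (fun y hy ↦ h.compl_adj ht hx (mem_compl.1 hy)) (by omega)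
  obtain ⟨s, hst, hs⟩ : ∃ s ⊆ tᶜ, G.IsNClique 4 s := by
    by_contra! hno
    have hcompl_lt := (isRamseyBound_three_four V).symm G tᶜ
      (fun s hs ↦ hno s (coe_subset.1 hs)) htriangle
    omega
  obtain ⟨y, hy⟩ : s.Nonempty := card_ne_zero.1 (by simp [hs.card_eq])
  have hrest_subset : ((tᶜ \ s : Finset V) : Set V) ⊆ (tᶜ : Finset V) ∩ Gᶜ.neighborSet y := by
    intro z hz
    obtain ⟨hzt, hzs⟩ := mem_sdiff.1 (mem_coe.1 hz)
    exact ⟨hzt, h.compl_adj hs hy hzs⟩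
  have hedge : Gᶜ.CliqueFreeOn (tᶜ \ s : Finset V) 2 :=
    (htriangle.of_succ _ (hst hy)).subset _ hrest_subset
  have hclique : G.IsClique (tᶜ \ s : Finset V) := by
    rw [← compl_compl G]
    exact fun a ha b hb hab ↦ ⟨hab, (Gᶜ.cliqueFreeOn_two).1 hedge ha hb hab⟩
  have hrest_card := card_sdiff_add_card_eq_card hst
  have hrest_le := h.card_le_of_isClique (by norm_num) hclique
  have hs_card := hs.card_eq
  omega

end PendantCliqueFree

theorem not_pendantCliqueFree_and_compl [Fintype V] (hcard : 18 ≤ Fintype.card V) :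
    ¬ (PendantCliqueFree G 4 ∧ PendantCliqueFree Gᶜ 4) := by
  rintro ⟨h, hc⟩
  have hG : G.CliqueFree 4 := h.cliqueFree_four hc (by omega)
  have hGc : Gᶜ.CliqueFree 4 := hc.cliqueFree_four (by rwa [compl_compl]) (by omega)
  exact (isRamseyBound_four_four V G univ hG.cliqueFreeOn hGc.cliqueFreeOn).not_ge hcard

end PendantClique

section Coloring

variable {n : ℕ} {α : Type*}

/-- The graph of the edges of color `i` in an edge-coloring of the complete graph on `Fin n`. For
a symmetric coloring `fromRel` only discards the diagonal, where `c` takes meaningless values. -/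
def colorGraph (c : Fin n → Fin n → α) (i : α) : SimpleGraph (Fin n) :=
  .fromRel fun u v ↦ c u v = i

theorem colorGraph_adj {c : Fin n → Fin n → α} (hc : IsSym c) {i : α} {u v : Fin n} :
    (colorGraph c i).Adj u v ↔ u ≠ v ∧ c u v = i := by
  simp [colorGraph, hc v u]

theorem colorGraph_true_compl {c : Fin n → Fin n → Bool} (hc : IsSym c) :
    (colorGraph c true)ᶜ = colorGraph c false := by
  ext u v
  simp +contextual [colorGraph_adj hc]

theorem pendantCliqueFree_colorGraph {c : Fin n → Fin n → α} (hc : IsSym c) {i : α}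
    (h : ¬ HasMonoK4plus c i) : PendantCliqueFree (colorGraph c i) 4 := by
  intro t ht x hx e he hxe
  obtain ⟨a, b, d, hab, had, hbd, htriangle⟩ :=
    SimpleGraph.is3Clique_iff.1 (ht.erase_of_mem hx)
  have hmem {y} (hy : y ∈ ({a, b, d} : Finset (Fin n))) : y ≠ e ∧ (colorGraph c i).Adj x y := by
    rw [← htriangle, mem_erase] at hy
    exact ⟨ne_of_mem_of_not_mem hy.2 he, ht.isClique hx hy.2 hy.1.symm⟩
  obtain ⟨hae, hxa⟩ := hmem (y := a) (by simp)
  obtain ⟨hbe, hxb⟩ := hmem (y := b) (by simp)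
  obtain ⟨hde, hxd⟩ := hmem (y := d) (by simp)
  rw [colorGraph_adj hc] at hab had hbd hxa hxb hxd hxe
  exact h ⟨x, a, b, d, e, hxa.1, hxb.1, hxd.1, hxe.1, hab.1, had.1, hae, hbd.1, hbe, hde,
    hxa.2, hxb.2, hxd.2, hxe.2, hab.2, had.2, hbd.2⟩

end Coloring

section Paley

/-- The Paley coloring of the complete graph on a finite field `F`: an edge is colored by whether
the difference of its ends is a nonzero square. It is symmetric when `-1` is a square in `F`. -/
def paleyColoring (F : Type*) [Field F] [Fintype F] [DecidableEq F] (u v : F) : Bool :=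
  quadraticChar F (v - u) = 1

variable {F : Type*} [Field F] [Fintype F] [DecidableEq F]

theorem paleyColoring_comm (h : IsSquare (-1 : F)) (u v : F) :
    paleyColoring F u v = paleyColoring F v u := by
  have hneg : quadraticChar F (-1) = 1 :=
    (quadraticChar_one_iff_isSquare (neg_ne_zero.2 one_ne_zero)).2 h
  rw [paleyColoring, paleyColoring, ← neg_sub, ← neg_one_mul, map_mul, hneg, one_mul]

theorem quadraticChar_div_eq_one_of_paleyColoring_eq {u v u' v' : F} (huv : u ≠ v) (huv' : u' ≠ v')
    (h : paleyColoring F u v = paleyColoring F u' v') :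
    quadraticChar F ((v' - u') / (v - u)) = 1 := by
  have hne : v - u ≠ 0 := sub_ne_zero.2 huv.symm
  have hne' : v' - u' ≠ 0 := sub_ne_zero.2 huv'.symm
  have hchar : quadraticChar F (v' - u') = quadraticChar F (v - u) := by
    rcases quadraticChar_dichotomy hne with h₁ | h₁ <;>
      rcases quadraticChar_dichotomy hne' with h₂ | h₂ <;>
        simp_all [paleyColoring]
  rw [div_eq_mul_inv, map_mul, hchar, ← map_mul, mul_inv_cancel₀ hne, map_one]

-- The affine map sending `x` to `0` and `a` to `1` turns a monochromatic `K₄` of either color into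
-- one whose differences are all squares.
theorem exists_quadraticChar_eq_one_of_paleyColoring_eq {x a b d : F} {i : Bool}
    (hxa : x ≠ a) (hxb : x ≠ b) (hxd : x ≠ d) (hab : a ≠ b) (had : a ≠ d) (hbd : b ≠ d)
    (cxa : paleyColoring F x a = i) (cxb : paleyColoring F x b = i)
    (cxd : paleyColoring F x d = i) (cab : paleyColoring F a b = i)
    (cad : paleyColoring F a d = i) (cbd : paleyColoring F b d = i) :
    ∃ y z : F, quadraticChar F y = 1 ∧ quadraticChar F (y - 1) = 1 ∧ quadraticChar F z = 1 ∧
      quadraticChar F (z - 1) = 1 ∧ quadraticChar F (z - y) = 1 := by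
  have hne : a - x ≠ 0 := sub_ne_zero.2 hxa.symm
  have hratio {u v : F} (huv : u ≠ v) (cuv : paleyColoring F u v = i) :
      quadraticChar F ((v - u) / (a - x)) = 1 :=
    quadraticChar_div_eq_one_of_paleyColoring_eq hxa huv (cxa.trans cuv.symm)
  refine ⟨(b - x) / (a - x), (d - x) / (a - x), hratio hxb cxb, ?_, hratio hxd cxd, ?_, ?_⟩
  · rw [div_sub_one hne, sub_sub_sub_cancel_right]
    exact hratio hab cab
  · rw [div_sub_one hne, sub_sub_sub_cancel_right]
    exact hratio had cad
  · rw [← sub_div, sub_sub_sub_cancel_right]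
    exact hratio hbd cbd

instance : Fact (Nat.Prime 17) := ⟨by norm_num⟩

theorem eq_two_or_nine_or_sixteen_of_quadraticChar_eq_one {y : ZMod 17}
    (hy : quadraticChar (ZMod 17) y = 1) (hy' : quadraticChar (ZMod 17) (y - 1) = 1) :
    y = 2 ∨ y = 9 ∨ y = 16 := by
  revert y
  decide

theorem not_hasMonoK4plus_paleyColoring_seventeen (i : Bool) :
    ¬ HasMonoK4plus (n := 17) (paleyColoring (ZMod 17)) i := by
  rintro ⟨x, a, b, d, -, hxa, hxb, hxd, -, hab, had, -, hbd, -, -, cxa, cxb, cxd, -, cab, cad, cbd⟩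
  obtain ⟨y, z, hy, hy', hz, hz', hyz⟩ := exists_quadraticChar_eq_one_of_paleyColoring_eq
    (F := ZMod 17) hxa hxb hxd hab had hbd cxa cxb cxd cab cad cbd
  rcases eq_two_or_nine_or_sixteen_of_quadraticChar_eq_one hy hy' with rfl | rfl | rfl <;>
    rcases eq_two_or_nine_or_sixteen_of_quadraticChar_eq_one hz hz' with rfl | rfl | rfl <;>
      revert hyz <;> decide

theorem isSym_paleyColoring_seventeen : IsSym (n := 17) (paleyColoring (ZMod 17)) :=
  paleyColoring_comm (F := ZMod 17) (ZMod.exists_sq_eq_neg_one_iff.2 (by norm_num))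

end Paley

theorem ramsey_K4plus_K4plus :
    (∀ c : Fin 18 → Fin 18 → Bool, IsSym c →
      HasMonoK4plus c true ∨ HasMonoK4plus c false) ∧
    (∃ c : Fin 17 → Fin 17 → Bool, IsSym c ∧
      ¬ HasMonoK4plus c true ∧ ¬ HasMonoK4plus c false) := by
  refine ⟨fun c hc ↦ ?_, paleyColoring (ZMod 17), isSym_paleyColoring_seventeen,
    not_hasMonoK4plus_paleyColoring_seventeen true,
    not_hasMonoK4plus_paleyColoring_seventeen false⟩
  by_contra! ⟨hred, hblue⟩
  have hblue_free := pendantCliqueFree_colorGraph hc hblue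
  rw [← colorGraph_true_compl hc] at hblue_free
  exact not_pendantCliqueFree_and_compl (by simp) ⟨pendantCliqueFree_colorGraph hc hred, hblue_free⟩
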